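/- (Final contradiction, Section 6) There do not exist real numbers m, c2, α, x1 satisfying all of: m ≥ 3; 0 < c2 ≤ m − 1; m·(m+1)/(m^2+1) < α, α < (m+1)/3, and α < 2; m − 1 < x1 < m; (m + 1 − 3α)·x1^2 − (m + 1 − 2α)·(m−1−c2)·x1 − (m + 1 − α)·c2·(m−1) + m·α ≥ 0; and x1^3 − (m−1−c2)·x1^2 − (m + c2·(m−1))·x1 ≤ 0. -/

import Mathlib

/-!
Put `t = x1 - (m - 1) ∈ (0, 1)`, `s = x1 + c2 > m - 1` and `u = m - t (m - 1) > 0`. The quadratic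
inequality says `(m + 1) P ≥ α D` with `P = t s` and `D = P + x1 s + x1 t - m > 0`. Multiplying by
`m ^ 2 + 1` and using `α (m ^ 2 + 1) > m (m + 1)` gives `(m ^ 2 + 1) P > m D`, which rearranges to
`m (u - t ^ 2) > s (m - 1) u`. This is impossible because `s (m - 1) > (m - 1) ^ 2 ≥ m` for
`m ≥ 3`.
-/

/-- Final contradiction of Section 6: no such m, c2, α, x1 exist. -/
theorem final_contradiction :
    ¬ ∃ m c2 α x1 : ℝ,
      m ≥ 3 ∧ 0 < c2 ∧ c2 ≤ m - 1 ∧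
      m * (m + 1) / (m ^ 2 + 1) < α ∧ α < (m + 1) / 3 ∧ α < 2 ∧
      m - 1 < x1 ∧ x1 < m ∧
      (m + 1 - 3 * α) * x1 ^ 2 - (m + 1 - 2 * α) * (m - 1 - c2) * x1 -
          (m + 1 - α) * c2 * (m - 1) + m * α ≥ 0 ∧
      x1 ^ 3 - (m - 1 - c2) * x1 ^ 2 - (m + c2 * (m - 1)) * x1 ≤ 0 := by
  rintro ⟨m, c, α, x, hm, hc, -, hα, -, -, hx, hx', hq, -⟩
  rw [div_lt_iff₀ (by positivity)] at hα
  obtain ⟨t, rfl⟩ : ∃ t, x = m - 1 + t := ⟨x - (m - 1), by ring⟩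
  obtain ⟨s, rfl⟩ : ∃ s, c = s - (m - 1 + t) := ⟨c + (m - 1 + t), by ring⟩
  have ht : 0 < t := by linarith
  have ht1 : t < 1 := by linarith
  have hs : m - 1 < s := by linarith
  have hu : 0 < m - t * (m - 1) := by nlinarith
  have hmm : m ≤ (m - 1) * (m - 1) := by nlinarith
  have hsm : m < s * (m - 1) := by nlinarith
  have hD : 0 < t * s + (m - 1 + t) * s + (m - 1 + t) * t - m := by
    have h1 : (m - 1) * s ≤ (m - 1 + t) * s := by nlinarith
    have h2 : 0 < t * s := mul_pos ht (by linarith)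
    have h3 : 0 < (m - 1 + t) * t := mul_pos (by linarith) ht
    linarith
  have hq' : α * (t * s + (m - 1 + t) * s + (m - 1 + t) * t - m) ≤ (m + 1) * (t * s) := by
    linarith
  have h1 := mul_lt_mul_of_pos_right hα hD
  have h2 := mul_le_mul_of_nonneg_left hq' (by positivity : (0 : ℝ) ≤ m ^ 2 + 1)
  have h3 : m * (t * s + (m - 1 + t) * s + (m - 1 + t) * t - m) < (m ^ 2 + 1) * (t * s) := by
    refine lt_of_mul_lt_mul_left (a := m + 1) ?_ (by linarith)
    linarith
  have h4 : s * (m - 1) * (m - t * (m - 1)) < m * (m - t * (m - 1) - t ^ 2) := by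
    linarith
  have h5 := mul_lt_mul_of_pos_right hsm hu
  have h6 : 0 ≤ m * t ^ 2 := by positivity
  linarith
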